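/- Let k be a field of characteristic p > 0, I an infinitesimal group scheme over k, and X a normal variety over k equipped with an I-action. Then the categorical quotient X/I is a normal variety over k. -/

import Mathlib

open AlgebraicGeometry CategoryTheory CategoryTheory.Limits Opposite

universe u

noncomputable section

/-- The spectrum of the field `k`, the base of all schemes considered. -/
abbrev Spk (k : Type u) [Field k] : Scheme.{u} := Spec (CommRingCat.of k)

/-- A scheme over the field `k`: a scheme together with a structure morphism to `Spec k`. -/
structure SchemeOver (k : Type u) [Field k] : Type (u + 1) where
  carrier : Scheme.{u}
  str : carrier ⟶ Spk k

variable (k : Type u) [Field k]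

/-- A group scheme over `k`, presented via its functor of points: for every scheme `T`
and every pair of `T`-points lying over the same `T`-point of `Spec k`, a product point,
together with unit and inverse, satisfying the group axioms functorially. -/
structure GroupSchemeOver extends SchemeOver k where
  mul : ∀ {T : Scheme.{u}} (a b : T ⟶ carrier), a ≫ str = b ≫ str → (T ⟶ carrier)
  one : Spk k ⟶ carrier
  inv : ∀ {T : Scheme.{u}}, (T ⟶ carrier) → (T ⟶ carrier)
  mul_str : ∀ {T : Scheme.{u}} (a b : T ⟶ carrier) (h), mul a b h ≫ str = a ≫ str
  one_str : one ≫ str = 𝟙 (Spk k)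
  inv_str : ∀ {T : Scheme.{u}} (a : T ⟶ carrier), inv a ≫ str = a ≫ str
  mul_natural : ∀ {T' T : Scheme.{u}} (g : T' ⟶ T) (a b : T ⟶ carrier) (h h'),
    g ≫ mul a b h = mul (g ≫ a) (g ≫ b) h'
  inv_natural : ∀ {T' T : Scheme.{u}} (g : T' ⟶ T) (a : T ⟶ carrier),
    g ≫ inv a = inv (g ≫ a)
  mul_assoc : ∀ {T : Scheme.{u}} (a b c : T ⟶ carrier) (h₁ h₂ h₃ h₄),
    mul (mul a b h₁) c h₂ = mul a (mul b c h₃) h₄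
  one_mul : ∀ {T : Scheme.{u}} (a : T ⟶ carrier) (h), mul (a ≫ str ≫ one) a h = a
  mul_one : ∀ {T : Scheme.{u}} (a : T ⟶ carrier) (h), mul a (a ≫ str ≫ one) h = a
  inv_mul : ∀ {T : Scheme.{u}} (a : T ⟶ carrier) (h), mul (inv a) a h = a ≫ str ≫ one

variable {k}

theorem GroupSchemeOver.mul_congr (G : GroupSchemeOver k) {T : Scheme.{u}}
    {a a' b b' : T ⟶ G.carrier} (ha : a = a') (hb : b = b') (h h') :
    G.mul a b h = G.mul a' b' h' := by subst ha; subst hb; rfl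

/-- A homomorphism of group schemes over `k`. -/
structure GroupHom (G H : GroupSchemeOver k) where
  hom : G.carrier ⟶ H.carrier
  hom_str : hom ≫ H.str = G.str
  hom_one : G.one ≫ hom = H.one
  hom_mul : ∀ {T : Scheme.{u}} (a b : T ⟶ G.carrier) (h h'),
    G.mul a b h ≫ hom = H.mul (a ≫ hom) (b ≫ hom) h'

/-- An action of a group scheme `G` over `k` on a scheme `X` over `k`, presented via
its functor of points. -/
structure ActionOver (G : GroupSchemeOver k) (X : SchemeOver k) where
  act : ∀ {T : Scheme.{u}} (g : T ⟶ G.carrier) (x : T ⟶ X.carrier),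
    g ≫ G.str = x ≫ X.str → (T ⟶ X.carrier)
  act_str : ∀ {T : Scheme.{u}} (g : T ⟶ G.carrier) (x : T ⟶ X.carrier) (h),
    act g x h ≫ X.str = x ≫ X.str
  act_natural : ∀ {T' T : Scheme.{u}} (f : T' ⟶ T) (g : T ⟶ G.carrier)
    (x : T ⟶ X.carrier) (h h'), f ≫ act g x h = act (f ≫ g) (f ≫ x) h'
  one_act : ∀ {T : Scheme.{u}} (x : T ⟶ X.carrier) (h), act (x ≫ X.str ≫ G.one) x h = x
  mul_act : ∀ {T : Scheme.{u}} (g g' : T ⟶ G.carrier) (x : T ⟶ X.carrier) (h₁ h₂ h₃ h₄),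
    act (G.mul g g' h₁) x h₂ = act g (act g' x h₃) h₄

theorem ActionOver.act_congr {G : GroupSchemeOver k} {X : SchemeOver k}
    (α : ActionOver G X) {T : Scheme.{u}} {g g' : T ⟶ G.carrier} {x x' : T ⟶ X.carrier}
    (hg : g = g') (hx : x = x') (h h') : α.act g x h = α.act g' x' h' := by
  subst hg; subst hx; rfl

/-- The action of a group scheme on itself by left translations. -/
def GroupSchemeOver.selfAction (G : GroupSchemeOver k) : ActionOver G G.toSchemeOver where
  act g x h := G.mul g x h
  act_str g x h := (G.mul_str g x h).trans h
  act_natural f g x h h' := G.mul_natural f g x h h'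
  one_act x h := G.one_mul x h
  mul_act g g' x h₁ h₂ h₃ h₄ := G.mul_assoc g g' x h₁ h₂ h₃ h₄

/-- Restriction of an action along a homomorphism of group schemes. -/
def ActionOver.res {G H : GroupSchemeOver k} {X : SchemeOver k} (φ : GroupHom H G)
    (α : ActionOver G X) : ActionOver H X where
  act g x h := α.act (g ≫ φ.hom) x (by rw [Category.assoc, φ.hom_str, h])
  act_str g x h := α.act_str _ _ _
  act_natural f g x h h' := by
    refine (α.act_natural f (g ≫ φ.hom) x _ ?_).trans (α.act_congr ?_ rfl _ _)
    · simp only [Category.assoc, φ.hom_str, ← h']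
    · simp only [Category.assoc]
  one_act x h := by
    refine (α.act_congr ?_ rfl _ ?_).trans (α.one_act x ?_)
    · simp only [Category.assoc, φ.hom_one]
    · simp only [Category.assoc, G.one_str, Category.comp_id]
    · simp only [Category.assoc, G.one_str, Category.comp_id]
  mul_act g g' x h₁ h₂ h₃ h₄ := by
    have hg : g ≫ H.str = x ≫ X.str := (H.mul_str g g' h₁).symm.trans h₂
    have hg' : g' ≫ H.str = x ≫ X.str := h₁.symm.trans hg
    have p1 : (g ≫ φ.hom) ≫ G.str = (g' ≫ φ.hom) ≫ G.str := by
      simp only [Category.assoc, φ.hom_str]; exact h₁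
    have p3 : (g' ≫ φ.hom) ≫ G.str = x ≫ X.str := by
      simp only [Category.assoc, φ.hom_str]; exact hg'
    refine (α.act_congr (φ.hom_mul g g' h₁ p1) rfl _ ?_).trans
      (α.mul_act (g ≫ φ.hom) (g' ≫ φ.hom) x p1 ?_ p3 ?_)
    · rw [G.mul_str]
      simp only [Category.assoc, φ.hom_str]; exact hg
    · rw [G.mul_str]
      simp only [Category.assoc, φ.hom_str]; exact hg
    · rw [α.act_str]
      simp only [Category.assoc, φ.hom_str]; exact hg
/-! ### Vector bundles and line bundles, geometrically -/

/-- The data underlying a (geometric) vector bundle on a scheme `X`: a total space `π : tot ⟶ X`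
together with a fiberwise `Γ(T, ⊤)`-module structure on the `T`-points of `tot` over a fixed
`T`-point of `X`, functorially in `T`. -/
structure VecBundleData (X : Scheme.{u}) : Type (u + 1) where
  tot : Scheme.{u}
  π : tot ⟶ X
  zero : X ⟶ tot
  zero_π : zero ≫ π = 𝟙 X
  add : ∀ {T : Scheme.{u}} (a b : T ⟶ tot), a ≫ π = b ≫ π → (T ⟶ tot)
  smul : ∀ {T : Scheme.{u}} (f : Γ(T, ⊤)) (a : T ⟶ tot), T ⟶ tot
  add_π : ∀ {T : Scheme.{u}} (a b : T ⟶ tot) (h), add a b h ≫ π = a ≫ π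
  smul_π : ∀ {T : Scheme.{u}} (f : Γ(T, ⊤)) (a : T ⟶ tot), smul f a ≫ π = a ≫ π
  add_natural : ∀ {T' T : Scheme.{u}} (g : T' ⟶ T) (a b : T ⟶ tot) (h h'),
    g ≫ add a b h = add (g ≫ a) (g ≫ b) h'
  smul_natural : ∀ {T' T : Scheme.{u}} (g : T' ⟶ T) (f : Γ(T, ⊤)) (a : T ⟶ tot),
    g ≫ smul f a = smul (g.appTop f) (g ≫ a)
  add_comm : ∀ {T : Scheme.{u}} (a b : T ⟶ tot) (h h'), add a b h = add b a h'
  add_assoc : ∀ {T : Scheme.{u}} (a b c : T ⟶ tot) (h₁ h₂ h₃ h₄),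
    add (add a b h₁) c h₂ = add a (add b c h₃) h₄
  zero_add : ∀ {T : Scheme.{u}} (a : T ⟶ tot) (h), add ((a ≫ π) ≫ zero) a h = a
  one_smul : ∀ {T : Scheme.{u}} (a : T ⟶ tot), smul 1 a = a
  mul_smul : ∀ {T : Scheme.{u}} (f g : Γ(T, ⊤)) (a : T ⟶ tot), smul (f * g) a = smul f (smul g a)
  smul_add : ∀ {T : Scheme.{u}} (f : Γ(T, ⊤)) (a b : T ⟶ tot) (h h'),
    smul f (add a b h) = add (smul f a) (smul f b) h'
  add_smul : ∀ {T : Scheme.{u}} (f g : Γ(T, ⊤)) (a : T ⟶ tot) (h),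
    smul (f + g) a = add (smul f a) (smul g a) h
  zero_smul : ∀ {T : Scheme.{u}} (a : T ⟶ tot), smul 0 a = (a ≫ π) ≫ zero
  smul_zero : ∀ {T : Scheme.{u}} (f : Γ(T, ⊤)) (x : T ⟶ X), smul f (x ≫ zero) = x ≫ zero

namespace VecBundleData

variable {X : Scheme.{u}} (E : VecBundleData X)

theorem add_congr {T : Scheme.{u}} {a a' b b' : T ⟶ E.tot} (ha : a = a') (hb : b = b')
    (h h') : E.add a b h = E.add a' b' h' := by subst ha; subst hb; rfl

/-- The fiber of a vector bundle over a `T`-point of the base. -/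
abbrev Fiber {T : Scheme.{u}} (x : T ⟶ X) : Type u := { a : T ⟶ E.tot // a ≫ E.π = x }

instance fiberZero {T : Scheme.{u}} (x : T ⟶ X) : Zero (E.Fiber x) :=
  ⟨⟨x ≫ E.zero, by rw [Category.assoc, E.zero_π, Category.comp_id]⟩⟩

instance fiberAdd {T : Scheme.{u}} (x : T ⟶ X) : Add (E.Fiber x) :=
  ⟨fun a b => ⟨E.add a.1 b.1 (a.2.trans b.2.symm), (E.add_π _ _ _).trans a.2⟩⟩

instance fiberSMul {T : Scheme.{u}} (x : T ⟶ X) : SMul Γ(T, ⊤) (E.Fiber x) :=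
  ⟨fun f a => ⟨E.smul f a.1, (E.smul_π _ _).trans a.2⟩⟩

@[simp] theorem coe_fiber_zero {T : Scheme.{u}} (x : T ⟶ X) :
    ((0 : E.Fiber x) : T ⟶ E.tot) = x ≫ E.zero := rfl

@[simp] theorem coe_fiber_add {T : Scheme.{u}} (x : T ⟶ X) (a b : E.Fiber x) :
    ((a + b : E.Fiber x) : T ⟶ E.tot) = E.add a.1 b.1 (a.2.trans b.2.symm) := rfl

@[simp] theorem coe_fiber_smul {T : Scheme.{u}} (x : T ⟶ X) (f : Γ(T, ⊤)) (a : E.Fiber x) :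
    ((f • a : E.Fiber x) : T ⟶ E.tot) = E.smul f a.1 := rfl

instance {T : Scheme.{u}} (x : T ⟶ X) : AddCommMonoid (E.Fiber x) where
  add_assoc a b c := Subtype.ext (E.add_assoc _ _ _ _ _ _ _)
  add_comm a b := Subtype.ext (E.add_comm _ _ _ _)
  zero_add a := Subtype.ext (by
    have hz : ((a.1 ≫ E.π) ≫ E.zero) ≫ E.π = a.1 ≫ E.π := by
      rw [Category.assoc, E.zero_π, Category.comp_id]
    show E.add (x ≫ E.zero) a.1 _ = a.1
    exact (E.add_congr (by rw [a.2]) rfl _ hz).trans (E.zero_add a.1 hz))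
  add_zero a := Subtype.ext (by
    have hz : ((a.1 ≫ E.π) ≫ E.zero) ≫ E.π = a.1 ≫ E.π := by
      rw [Category.assoc, E.zero_π, Category.comp_id]
    have hz' : (x ≫ E.zero) ≫ E.π = a.1 ≫ E.π := by
      rw [Category.assoc, E.zero_π, Category.comp_id, a.2]
    show E.add a.1 (x ≫ E.zero) _ = a.1
    exact (E.add_comm _ _ _ hz').trans
      ((E.add_congr (by rw [a.2]) rfl _ hz).trans (E.zero_add a.1 hz)))
  nsmul := nsmulRec
  nsmul_zero _ := rfl
  nsmul_succ _ _ := rfl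

instance {T : Scheme.{u}} (x : T ⟶ X) : Module Γ(T, ⊤) (E.Fiber x) where
  one_smul a := Subtype.ext (E.one_smul a.1)
  mul_smul f g a := Subtype.ext (E.mul_smul f g a.1)
  smul_zero f := Subtype.ext (E.smul_zero f x)
  smul_add f a b := Subtype.ext (E.smul_add f a.1 b.1 _ _)
  add_smul f g a := Subtype.ext (E.add_smul f g a.1 _)
  zero_smul a := Subtype.ext ((E.zero_smul a.1).trans (by rw [a.2]; rfl))

/-- A family of `n` local sections of `E` over an open subset `U` is a frame if every point
of the total space over `U` is, in a unique way, a linear combination of these sections. -/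
def IsFrame {n : ℕ} (U : X.Opens) (s : Fin n → (U.toScheme ⟶ E.tot)) : Prop :=
  ∃ hs : ∀ i, s i ≫ E.π = U.ι,
    ∀ {T : Scheme.{u}} (x : T ⟶ U.toScheme),
      Function.Bijective (fun f : Fin n → Γ(T, ⊤) =>
        (∑ i, f i • (⟨x ≫ s i, by rw [Category.assoc, hs i]⟩ : E.Fiber (x ≫ U.ι))))

/-- A family of `n` global sections of `E` is a global frame if every point of the total
space is, in a unique way, a linear combination of these sections. -/
def IsGlobalFrame {n : ℕ} (s : Fin n → (X ⟶ E.tot)) : Prop :=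
  ∃ hs : ∀ i, s i ≫ E.π = 𝟙 X,
    ∀ {T : Scheme.{u}} (x : T ⟶ X),
      Function.Bijective (fun f : Fin n → Γ(T, ⊤) =>
        (∑ i, f i • (⟨x ≫ s i, by rw [Category.assoc, hs i, Category.comp_id]⟩ : E.Fiber x)))

end VecBundleData

/-- A (geometric) vector bundle of rank `n` on `X`: bundle data which is locally trivial,
i.e. admits local frames around every point of `X`. -/
structure VecBundle (n : ℕ) (X : Scheme.{u}) extends VecBundleData X where
  locTriv : ∀ x : X, ∃ (U : X.Opens) (s : Fin n → (U.toScheme ⟶ tot)),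
    x ∈ U ∧ toVecBundleData.IsFrame U s

/-- A (geometric) line bundle on a scheme. -/
abbrev LineBundle (X : Scheme.{u}) := VecBundle 1 X

/-- A morphism of total spaces of vector bundles over `X` is linear if it commutes with the
projections, the fiberwise additions and the fiberwise scalar multiplications. -/
def IsLinearHom {X : Scheme.{u}} (E F : VecBundleData X) (φ : E.tot ⟶ F.tot) : Prop :=
  (φ ≫ F.π = E.π) ∧
  (∀ {T : Scheme.{u}} (a b : T ⟶ E.tot) (h h'), E.add a b h ≫ φ = F.add (a ≫ φ) (b ≫ φ) h') ∧
  (∀ {T : Scheme.{u}} (f : Γ(T, ⊤)) (a : T ⟶ E.tot), E.smul f a ≫ φ = F.smul f (a ≫ φ))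

/-- Two vector bundles on `X` are isomorphic if there is a linear isomorphism between them. -/
def VBIso {X : Scheme.{u}} {n m : ℕ} (E : VecBundle n X) (F : VecBundle m X) : Prop :=
  ∃ φ : E.tot ⟶ F.tot, IsLinearHom E.toVecBundleData F.toVecBundleData φ ∧ IsIso φ

/-- `F` is a pullback of the vector bundle `E` along `g : Y ⟶ X`. -/
def IsPullbackBundle {Y X : Scheme.{u}} (g : Y ⟶ X) {n : ℕ} (E : VecBundle n X)
    (F : VecBundle n Y) : Prop :=
  ∃ τ : F.tot ⟶ E.tot,
    (τ ≫ E.π = F.π ≫ g) ∧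
    (∀ {T : Scheme.{u}} (a b : T ⟶ F.tot) (h h'), F.add a b h ≫ τ = E.add (a ≫ τ) (b ≫ τ) h') ∧
    (∀ {T : Scheme.{u}} (f : Γ(T, ⊤)) (a : T ⟶ F.tot), F.smul f a ≫ τ = E.smul f (a ≫ τ)) ∧
    (∀ {T : Scheme.{u}} (y : T ⟶ Y) (a : T ⟶ E.tot), a ≫ E.π = y ≫ g →
      ∃! b : T ⟶ F.tot, b ≫ F.π = y ∧ b ≫ τ = a)

/-- A vector bundle is trivial if it admits a global frame. -/
def IsTrivialBundle {X : Scheme.{u}} {n : ℕ} (E : VecBundle n X) : Prop :=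
  ∃ s : Fin n → (X ⟶ E.tot), E.toVecBundleData.IsGlobalFrame s

/-- `N` is a tensor product of the line bundles `L` and `M`: witnessed by a fiberwise
bilinear pairing taking local frames to local frames. -/
def IsTensor {X : Scheme.{u}} (L M N : LineBundle X) : Prop :=
  ∃ β : ∀ {T : Scheme.{u}} (a : T ⟶ L.tot) (b : T ⟶ M.tot), a ≫ L.π = b ≫ M.π → (T ⟶ N.tot),
    (∀ {T : Scheme.{u}} (a : T ⟶ L.tot) (b : T ⟶ M.tot) (h), β a b h ≫ N.π = a ≫ L.π) ∧
    (∀ {T' T : Scheme.{u}} (g : T' ⟶ T) (a : T ⟶ L.tot) (b : T ⟶ M.tot) (h h'),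
      g ≫ β a b h = β (g ≫ a) (g ≫ b) h') ∧
    (∀ {T : Scheme.{u}} (a a' : T ⟶ L.tot) (b : T ⟶ M.tot) (h₁ h₂ h₃ h₄ h₅),
      β (L.add a a' h₁) b h₂ = N.add (β a b h₃) (β a' b h₄) h₅) ∧
    (∀ {T : Scheme.{u}} (a : T ⟶ L.tot) (b b' : T ⟶ M.tot) (h₁ h₂ h₃ h₄ h₅),
      β a (M.add b b' h₁) h₂ = N.add (β a b h₃) (β a b' h₄) h₅) ∧
    (∀ {T : Scheme.{u}} (f : Γ(T, ⊤)) (a : T ⟶ L.tot) (b : T ⟶ M.tot) (h₁ h₂),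
      β (L.smul f a) b h₁ = N.smul f (β a b h₂)) ∧
    (∀ {T : Scheme.{u}} (f : Γ(T, ⊤)) (a : T ⟶ L.tot) (b : T ⟶ M.tot) (h₁ h₂),
      β a (M.smul f b) h₁ = N.smul f (β a b h₂)) ∧
    (∀ (U : X.Opens) (sL : Fin 1 → (U.toScheme ⟶ L.tot)) (sM : Fin 1 → (U.toScheme ⟶ M.tot)),
      L.toVecBundleData.IsFrame U sL → M.toVecBundleData.IsFrame U sM →
      ∀ (h : sL 0 ≫ L.π = sM 0 ≫ M.π),
        N.toVecBundleData.IsFrame (n := 1) U (fun _ => β (sL 0) (sM 0) h))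

/-- `N` is an `m`-th tensor power of the line bundle `L`. -/
def IsTensorPow {X : Scheme.{u}} (L : LineBundle X) : ℕ → LineBundle X → Prop
  | 0, N => IsTrivialBundle N
  | m + 1, N => ∃ M : LineBundle X, IsTensorPow L m M ∧ IsTensor M L N

/-- A line bundle is ample if the base is quasi-compact and quasi-separated and the
non-vanishing loci of global sections of positive tensor powers give an affine open cover. -/
def IsAmple {X : Scheme.{u}} (L : LineBundle X) : Prop :=
  CompactSpace X ∧ QuasiSeparatedSpace X ∧
  ∀ x : X, ∃ (m : ℕ), 0 < m ∧ ∃ (N : LineBundle X), IsTensorPow L m N ∧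
    ∃ (s : X ⟶ N.tot), s ≫ N.π = 𝟙 X ∧
      ∃ U : X.Opens, IsAffineOpen U ∧ x ∈ U ∧
        (U : Set X) = {y : X | s.base y ≠ N.zero.base y}
/-! ### Properties of schemes and group schemes over `k` -/

/-- An algebraic group over `k` is a group scheme of finite type over `k`. -/
def GroupSchemeOver.IsAlgebraic {k : Type u} [Field k] (G : GroupSchemeOver k) : Prop :=
  LocallyOfFiniteType G.str ∧ QuasiCompact G.str

/-- A scheme of finite type over `k`. -/
def SchemeOver.IsFiniteType {k : Type u} [Field k] (X : SchemeOver k) : Prop :=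
  LocallyOfFiniteType X.str ∧ QuasiCompact X.str

/-- A variety over `k`: an integral separated scheme of finite type over `k`. -/
def SchemeOver.IsVariety {k : Type u} [Field k] (X : SchemeOver k) : Prop :=
  IsIntegral X.carrier ∧ AlgebraicGeometry.IsSeparated X.str ∧ X.IsFiniteType

/-- A scheme is normal if all its local rings are integrally closed domains. -/
def IsNormalScheme (X : Scheme.{u}) : Prop :=
  ∀ x : X, IsDomain (X.presheaf.stalk x) ∧ IsIntegrallyClosed (X.presheaf.stalk x)

/-- The base change of a scheme over `k` to the algebraic closure of `k`. -/
def SchemeOver.geomFiber {k : Type u} [Field k] (X : SchemeOver k) : Scheme.{u} :=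
  pullback X.str (Spec.map (CommRingCat.ofHom (algebraMap k (AlgebraicClosure k))))

/-- A scheme over `k` is geometrically integral if its base change to an algebraic
closure of `k` is integral. -/
def SchemeOver.IsGeomIntegral {k : Type u} [Field k] (X : SchemeOver k) : Prop :=
  IsIntegral X.geomFiber

/-- A scheme over `k` is geometrically connected if its base change to an algebraic
closure of `k` is connected. -/
def SchemeOver.IsGeomConnected {k : Type u} [Field k] (X : SchemeOver k) : Prop :=
  ConnectedSpace X.geomFiber

/-- A scheme over `k` is geometrically irreducible if its base change to an algebraic
closure of `k` is irreducible. -/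
def SchemeOver.IsGeomIrreducible {k : Type u} [Field k] (X : SchemeOver k) : Prop :=
  IrreducibleSpace X.geomFiber

/-- An open subscheme of a scheme over `k`, as a scheme over `k`. -/
def SchemeOver.ofOpens {k : Type u} [Field k] (X : SchemeOver k) (U : X.carrier.Opens) :
    SchemeOver k :=
  ⟨U.toScheme, U.ι ≫ X.str⟩

/-- A scheme over `k` is quasi-projective if it is separated, of finite type, and carries
an ample line bundle. -/
def SchemeOver.IsQuasiProjective {k : Type u} [Field k] (X : SchemeOver k) : Prop :=
  AlgebraicGeometry.IsSeparated X.str ∧ X.IsFiniteType ∧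
    ∃ L : LineBundle X.carrier, IsAmple L

/-- An open subset of `X` is stable under an action of `G` if the action preserves its
`T`-points, for all `T`. -/
def ActionOver.Stable {k : Type u} [Field k] {G : GroupSchemeOver k} {X : SchemeOver k}
    (α : ActionOver G X) (U : X.carrier.Opens) : Prop :=
  ∀ {T : Scheme.{u}} (g : T ⟶ G.carrier) (x : T ⟶ X.carrier) (h),
    Set.range x.base ⊆ (U : Set X.carrier) →
      Set.range (α.act g x h).base ⊆ (U : Set X.carrier)

/-- A `G`-linearization of a vector bundle `E` on a `G`-scheme `X`: an action of `G` on the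
total space of `E`, lifting the action on `X` and acting linearly on the fibers (equivalently,
an action of `G × 𝔾ₘ` on `E` for which the projection is equivariant and `𝔾ₘ` acts by
multiplication on the fibers). -/
structure LinearizationData {k : Type u} [Field k] {G : GroupSchemeOver k} {X : SchemeOver k}
    (α : ActionOver G X) {n : ℕ} (E : VecBundle n X.carrier) where
  lact : ∀ {T : Scheme.{u}} (g : T ⟶ G.carrier) (e : T ⟶ E.tot),
    g ≫ G.str = (e ≫ E.π) ≫ X.str → (T ⟶ E.tot)
  lact_π : ∀ {T : Scheme.{u}} (g : T ⟶ G.carrier) (e : T ⟶ E.tot) (h h'),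
    lact g e h ≫ E.π = α.act g (e ≫ E.π) h'
  lact_natural : ∀ {T' T : Scheme.{u}} (f : T' ⟶ T) (g : T ⟶ G.carrier) (e : T ⟶ E.tot) (h h'),
    f ≫ lact g e h = lact (f ≫ g) (f ≫ e) h'
  one_lact : ∀ {T : Scheme.{u}} (e : T ⟶ E.tot) (h), lact (((e ≫ E.π) ≫ X.str) ≫ G.one) e h = e
  mul_lact : ∀ {T : Scheme.{u}} (g g' : T ⟶ G.carrier) (e : T ⟶ E.tot) (h₁ h₂ h₃ h₄),
    lact (G.mul g g' h₁) e h₂ = lact g (lact g' e h₃) h₄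
  lact_add : ∀ {T : Scheme.{u}} (g : T ⟶ G.carrier) (a b : T ⟶ E.tot) (h₁ h₂ h₃ h₄ h₅),
    lact g (E.add a b h₁) h₂ = E.add (lact g a h₃) (lact g b h₄) h₅
  lact_smul : ∀ {T : Scheme.{u}} (g : T ⟶ G.carrier) (f : Γ(T, ⊤)) (a : T ⟶ E.tot) (h₁ h₂),
    lact g (E.smul f a) h₁ = E.smul f (lact g a h₂)

/-- A vector bundle is `G`-linearized (linearizable) if it admits a linearization. -/
def ActionOver.IsLinearized {k : Type u} [Field k] {G : GroupSchemeOver k} {X : SchemeOver k}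
    (α : ActionOver G X) {n : ℕ} (E : VecBundle n X.carrier) : Prop :=
  Nonempty (LinearizationData α E)

/-- Equivariance of a morphism relative to a homomorphism of group schemes. -/
def IsEquivariantRel {k : Type u} [Field k] {G H : GroupSchemeOver k} {X Y : SchemeOver k}
    (φ : GroupHom G H) (α : ActionOver G X) (β : ActionOver H Y)
    (f : X.carrier ⟶ Y.carrier) : Prop :=
  f ≫ Y.str = X.str ∧
  ∀ {T : Scheme.{u}} (g : T ⟶ G.carrier) (x : T ⟶ X.carrier) (h h'),
    α.act g x h ≫ f = β.act (g ≫ φ.hom) (x ≫ f) h'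

/-- Equivariance of a morphism of `G`-schemes. -/
def IsEquivariant {k : Type u} [Field k] {G : GroupSchemeOver k} {X Y : SchemeOver k}
    (α : ActionOver G X) (β : ActionOver G Y) (f : X.carrier ⟶ Y.carrier) : Prop :=
  f ≫ Y.str = X.str ∧
  ∀ {T : Scheme.{u}} (g : T ⟶ G.carrier) (x : T ⟶ X.carrier) (h h'),
    α.act g x h ≫ f = β.act g (x ≫ f) h'

/-- A `T`-point of `G` acts trivially if it acts trivially on all points of `X` over `T`. -/
def ActionOver.ActsTrivially {k : Type u} [Field k] {G : GroupSchemeOver k}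
    {X : SchemeOver k} (α : ActionOver G X) {T : Scheme.{u}} (g : T ⟶ G.carrier) : Prop :=
  ∀ {T' : Scheme.{u}} (t : T' ⟶ T) (x : T' ⟶ X.carrier) (h), α.act (t ≫ g) x h = x

/-- An action is almost faithful if its kernel is finite, i.e. all trivially acting points
factor through a fixed closed subscheme of `G` which is finite over `k`. -/
def ActionOver.IsAlmostFaithful {k : Type u} [Field k] {G : GroupSchemeOver k}
    {X : SchemeOver k} (α : ActionOver G X) : Prop :=
  ∃ (K : Scheme.{u}) (ι : K ⟶ G.carrier), IsClosedImmersion ι ∧ IsFinite (ι ≫ G.str) ∧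
    ∀ {T : Scheme.{u}} (g : T ⟶ G.carrier), α.ActsTrivially g → ∃ g' : T ⟶ K, g' ≫ ι = g

/-- An abelian variety over `k` is a smooth connected proper algebraic group over `k`. -/
def GroupSchemeOver.IsAbelianVariety {k : Type u} [Field k] (G : GroupSchemeOver k) : Prop :=
  G.IsAlgebraic ∧ IsSmooth G.str ∧ ConnectedSpace G.carrier ∧ IsProper G.str
/-! ### Frobenius twists and quotients in characteristic `p` -/

/-- The morphism `Spec k ⟶ Spec k` induced by the `n`-th iterate of the Frobenius of `k`. -/
def frobSpec (k : Type u) [Field k] (p : ℕ) [Fact p.Prime] [CharP k p] (n : ℕ) :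
    Spk k ⟶ Spk k :=
  Spec.map (CommRingCat.ofHom (iterateFrobenius k p n))

/-- `F : X ⟶ X` is the absolute `q`-power Frobenius endomorphism of `X`: the identity on the
underlying space, and the `q`-th power map on functions. -/
def IsAbsoluteFrobenius (X : Scheme.{u}) (q : ℕ) (F : X ⟶ X) : Prop :=
  (∀ x : X, F.base x = x) ∧
  ∀ (U : X.Opens) (e : Opposite.op U = Opposite.op (F ⁻¹ᵁ U)) (a : Γ(X, U)),
    F.app U a = X.presheaf.map (eqToHom e) (a ^ q)

/-- Data exhibiting the `n`-th Frobenius twist `X^{(pⁿ)}` of a scheme `X` over `k` (as the base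
change of `X` along the `n`-th Frobenius of `k`), together with the relative Frobenius morphism
`F^n_{X/k} : X ⟶ X^{(pⁿ)}` (the canonical factorization of the absolute Frobenius). -/
structure FrobeniusData (k : Type u) [Field k] (p : ℕ) [Fact p.Prime] [CharP k p] (n : ℕ)
    (X : SchemeOver k) where
  tw : SchemeOver k
  pr : tw.carrier ⟶ X.carrier
  is_pullback : IsPullback pr tw.str X.str (frobSpec k p n)
  rel : X.carrier ⟶ tw.carrier
  rel_str : rel ≫ tw.str = X.str
  abs : X.carrier ⟶ X.carrier
  abs_frob : IsAbsoluteFrobenius X.carrier (p ^ n) abs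
  rel_pr : rel ≫ pr = abs

/-- A group scheme over `k` is infinitesimal if it is finite and radicial over `Spec k`. -/
def GroupSchemeOver.IsInfinitesimal {k : Type u} [Field k] (I : GroupSchemeOver k) : Prop :=
  I.IsAlgebraic ∧ IsFinite I.str ∧ UniversallyInjective I.str

/-- `n` is at least the height of the infinitesimal group scheme `I`, i.e. the `n`-th relative
Frobenius of `I` factors through the unit section of the twist (equivalently `I_n = I`). -/
def FrobKillsAt (k : Type u) [Field k] (p : ℕ) [Fact p.Prime] [CharP k p]
    (I : GroupSchemeOver k) (n : ℕ) : Prop :=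
  ∀ FD : FrobeniusData k p n I.toSchemeOver,
    ∃ u : Spk k ⟶ FD.tw.carrier,
      u ≫ FD.pr = frobSpec k p n ≫ I.one ∧ u ≫ FD.tw.str = 𝟙 (Spk k) ∧
      FD.rel = I.str ≫ u

/-- `φ : X ⟶ Q` is a categorical quotient (in the category of schemes over `k`) of `X` by the
action `α`. -/
def IsCatQuotient {k : Type u} [Field k] {I : GroupSchemeOver k} {X : SchemeOver k}
    (α : ActionOver I X) (Q : SchemeOver k) (φ : X.carrier ⟶ Q.carrier) : Prop :=
  φ ≫ Q.str = X.str ∧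
  (∀ {T : Scheme.{u}} (g : T ⟶ I.carrier) (x : T ⟶ X.carrier) (h),
    α.act g x h ≫ φ = x ≫ φ) ∧
  ∀ (Z : SchemeOver k) (u : X.carrier ⟶ Z.carrier), u ≫ Z.str = X.str →
    (∀ {T : Scheme.{u}} (g : T ⟶ I.carrier) (x : T ⟶ X.carrier) (h),
      α.act g x h ≫ u = x ≫ u) →
    ∃! v : Q.carrier ⟶ Z.carrier, φ ≫ v = u

/-- Data exhibiting the Frobenius twist `G^{(pⁿ)}` of a group scheme `G` over `k`, as a group
scheme, together with the relative Frobenius homomorphism. -/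
structure TwistedGroupData (k : Type u) [Field k] (p : ℕ) [Fact p.Prime] [CharP k p] (n : ℕ)
    (G : GroupSchemeOver k) where
  tw : GroupSchemeOver k
  pr : tw.carrier ⟶ G.carrier
  is_pullback : IsPullback pr tw.str G.str (frobSpec k p n)
  pr_mul : ∀ {T : Scheme.{u}} (a b : T ⟶ tw.carrier) (h h'),
    tw.mul a b h ≫ pr = G.mul (a ≫ pr) (b ≫ pr) h'
  rel : GroupHom G tw
  abs : G.carrier ⟶ G.carrier
  abs_frob : IsAbsoluteFrobenius G.carrier (p ^ n) abs
  rel_pr : rel.hom ≫ pr = abs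

/-- Data exhibiting the Frobenius twist of an action: the induced action of `G^{(pⁿ)}` on
`X^{(pⁿ)}`, compatible with the projections and with the relative Frobenii. -/
structure TwistedActionData {k : Type u} [Field k] {p : ℕ} [Fact p.Prime] [CharP k p] {n : ℕ}
    {G : GroupSchemeOver k} {X : SchemeOver k} (α : ActionOver G X)
    (GT : TwistedGroupData k p n G) (FD : FrobeniusData k p n X) where
  tact : ActionOver GT.tw FD.tw
  compat : ∀ {T : Scheme.{u}} (g : T ⟶ GT.tw.carrier) (x : T ⟶ FD.tw.carrier) (h h'),
    tact.act g x h ≫ FD.pr = α.act (g ≫ GT.pr) (x ≫ FD.pr) h'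
  rel_equivariant : ∀ {T : Scheme.{u}} (g : T ⟶ G.carrier) (x : T ⟶ X.carrier) (h h'),
    α.act g x h ≫ FD.rel = tact.act (g ≫ GT.rel.hom) (x ≫ FD.rel) h'

/-!
Let `a, s : I ×ₖ X ⟶ X` be the action and the projection. The unit section is a surjection onto
`I ×ₖ X` that equalizes them, so `a♯ f - s♯ f` is nilpotent for every section `f` of `X` over an
affine open `U`, and in characteristic `p` some power `f ^ pⁿ` is invariant. Hence `Γ(X, U)` is
integral over its subring of invariants `B` and `U ⟶ Spec B` is a homeomorphism; as invariants
commute with localization at an invariant, these spectra glue to a scheme `Y`, and `X ⟶ Y` is the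
categorical quotient. It is integral and bijective and `Y` is reduced, so that integrality,
separatedness and finite type (Artin–Tate) descend from `X` to `Y`.

For normality, let `b ≠ 0` and `b * c` be invariant. Then `s♯ b * (a♯ c - s♯ c) = 0`, and `c` is
invariant because `s` is flat. So `B` contains every quotient of its elements that lies in
`Γ(X, U)`, and it inherits integral closedness from `Γ(X, U)`.
-/

section CommutativeAlgebra

theorem exists_pow_eq_pow_of_isNilpotent_sub {R : Type*} [CommRing R] {p : ℕ} (hp : p.Prime)
    (hpR : (p : R) = 0) {x y : R} (hxy : IsNilpotent (x - y)) : ∃ n, 0 < n ∧ x ^ n = y ^ n := by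
  cases subsingleton_or_nontrivial R
  · exact ⟨1, one_pos, Subsingleton.elim _ _⟩
  have : Fact p.Prime := ⟨hp⟩
  have : CharP R p := (CharP.charP_iff_prime_eq_zero hp).mpr hpR
  obtain ⟨n, hn⟩ := hxy
  refine ⟨p ^ n, pow_pos hp.pos n, sub_eq_zero.mp ?_⟩
  rw [← sub_pow_char_pow]
  exact pow_eq_zero_of_le (Nat.lt_pow_self hp.one_lt).le hn

theorem isIntegral_subtype_of_forall_exists_pow_mem {A : Type*} [CommRing A] {B : Subring A}
    (hB : ∀ a : A, ∃ n, 0 < n ∧ a ^ n ∈ B) : B.subtype.IsIntegral := fun a ↦ by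
  obtain ⟨n, hn, ha⟩ := hB a
  exact IsIntegral.of_pow hn (B.subtype.isIntegralElem_map (x := ⟨_, ha⟩))

theorem isHomeomorph_comap_subtype_of_forall_exists_pow_mem {A : Type*} [CommRing A]
    {B : Subring A} (hB : ∀ a : A, ∃ n, 0 < n ∧ a ^ n ∈ B) :
    IsHomeomorph (PrimeSpectrum.comap B.subtype) := by
  refine PrimeSpectrum.isHomeomorph_comap _ (fun a ↦ ?_) ?_
  · obtain ⟨n, hn, ha⟩ := hB a
    exact ⟨n, hn, ⟨_, ha⟩, rfl⟩
  · rw [(RingHom.injective_iff_ker_eq_bot _).mp B.subtype_injective]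
    exact bot_le

-- Localization is exact, so it commutes with the equalizer of two ring homomorphisms.
theorem isLocalizationAway_eqLocus {A A' R R' : Type*} [CommRing A] [CommRing A'] [CommRing R]
    [CommRing R'] [Algebra A A'] [Algebra R R'] {f g : A →+* R} {f' g' : A' →+* R'}
    (hf : f'.comp (algebraMap A A') = (algebraMap R R').comp f)
    (hg : g'.comp (algebraMap A A') = (algebraMap R R').comp g)
    [Algebra (f.eqLocus g) (f'.eqLocus g')]
    (hval : ∀ x, (algebraMap (f.eqLocus g) (f'.eqLocus g') x : A') = algebraMap A A' x)
    (b : f.eqLocus g) [IsLocalization.Away (b : A) A'] [IsLocalization.Away (g b) R'] :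
    IsLocalization.Away b (f'.eqLocus g') := by
  have hfb : f b = g b := b.2
  refine .mk b ?_ (fun x ↦ ?_) (fun x y hxy ↦ ?_)
  · rw [← isUnit_map_iff (f'.eqLocus g').subtype, Subring.subtype_apply, hval]
    exact IsLocalization.Away.algebraMap_isUnit (b : A)
  · obtain ⟨n, a, ha⟩ := IsLocalization.Away.surj (b : A) (x : A')
    have hbx : algebraMap R R' (f a) = algebraMap R R' (g a) := by
      have hax : algebraMap A A' a ∈ f'.eqLocus g' := by
        rw [← ha, ← map_pow, ← SubmonoidClass.coe_pow, ← hval]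
        exact mul_mem x.2 (SetLike.coe_mem _)
      exact congr($hf a).symm.trans (Eq.trans hax congr($hg a))
    obtain ⟨m, hm⟩ := IsLocalization.Away.exists_of_eq (g b) hbx
    have hmem : (b : A) ^ m * a ∈ f.eqLocus g := by
      simpa only [RingHom.mem_eqLocus, map_mul, map_pow, hfb] using hm
    refine ⟨m + n, ⟨_, hmem⟩, Subtype.ext ?_⟩
    simp only [Subring.coe_mul, SubmonoidClass.coe_pow, hval, map_mul, map_pow, ← ha]
    ring
  · obtain ⟨n, hn⟩ := IsLocalization.Away.exists_of_eq (b : A)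
      (show algebraMap A A' x = algebraMap A A' y by rw [← hval, ← hval, hxy])
    exact ⟨n, Subtype.ext hn⟩

theorem isIntegrallyClosed_of_saturated_subring {A : Type*} [CommRing A] [IsDomain A]
    [IsIntegrallyClosed A] {B : Subring A}
    (hB : ∀ b ∈ B, b ≠ 0 → ∀ a, b * a ∈ B → a ∈ B) : IsIntegrallyClosed B := by
  let K := FractionRing A
  have hinj : Function.Injective (algebraMap B K) :=
    (IsFractionRing.injective A K).comp Subtype.val_injective
  let f : FractionRing B →ₐ[B] K := IsFractionRing.liftAlgHom (g := Algebra.ofId B K) hinj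
  refine (isIntegrallyClosed_iff (FractionRing B)).mpr fun {x} hx ↦ ?_
  obtain ⟨a, ha⟩ := IsIntegrallyClosed.isIntegral_iff.mp ((hx.map f).tower_top (A := A))
  obtain ⟨c, b, hb, rfl⟩ := IsFractionRing.div_surjective (A := B) x
  have hb0 : b ≠ 0 := nonZeroDivisors.ne_zero hb
  have hba : (b : A) * a = c := by
    apply IsFractionRing.injective A K
    have hfb : f (algebraMap B _ b) ≠ 0 := by simpa using hb0
    rw [map_mul, ha, map_div₀]
    simp only [AlgHom.commutes] at hfb ⊢
    exact mul_div_cancel₀ _ hfb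
  have haB : a ∈ B := hB b b.2 (by simpa using hb0) a (hba ▸ c.2)
  exact ⟨⟨a, haB⟩, f.toRingHom.injective ((f.commutes ⟨a, haB⟩).trans ha)⟩

theorem eq_zero_of_map_mul_eq_zero_of_flat {A R : Type*} [CommRing A] [IsDomain A] [CommRing R]
    {f : A →+* R} (hf : f.Flat) {a : A} (ha : a ≠ 0) {r : R} (h : f a * r = 0) : r = 0 := by
  algebraize [f]
  exact (smul_eq_zero_iff_right ha).mp ((Algebra.smul_def a r).trans h)

theorem isIntegrallyClosed_eqLocus_of_flat {A R : Type*} [CommRing A] [IsDomain A]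
    [IsIntegrallyClosed A] [CommRing R] (f : A →+* R) {g : A →+* R} (hg : g.Flat) :
    IsIntegrallyClosed (f.eqLocus g) := by
  refine isIntegrallyClosed_of_saturated_subring fun b hb hb0 a hba ↦ ?_
  refine sub_eq_zero.mp (eq_zero_of_map_mul_eq_zero_of_flat hg hb0 ?_)
  have hb' : f b = g b := hb
  have hba' : f (b * a) = g (b * a) := hba
  rw [mul_sub, ← map_mul g, ← hba', map_mul, hb', sub_self]

theorem finiteType_of_comp_of_isIntegral_of_injective {R B A : Type*} [CommRing R] [CommRing B]
    [CommRing A] [IsNoetherianRing R] {f : R →+* B} {g : B →+* A} (hgf : (g.comp f).FiniteType)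
    (hg : g.IsIntegral) (hinj : Function.Injective g) : f.FiniteType := by
  algebraize [f, g, g.comp f]
  have : Module.Finite B A := hg.to_finite (.of_comp_finiteType hgf)
  exact ⟨fg_of_fg_of_fg R B A Algebra.FiniteType.out Module.Finite.fg_top hinj⟩

end CommutativeAlgebra

section Schemes

theorem basicOpen_eq_bot_of_app_eq_zero {X Y : Scheme.{u}} (f : X ⟶ Y) [Surjective f]
    {U : Y.Opens} {t : Γ(Y, U)} (ht : f.app U t = 0) : Y.basicOpen t = ⊥ := by
  have hempty : f ⁻¹ᵁ Y.basicOpen t = ⊥ := by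
    rw [Scheme.preimage_basicOpen, ht, Scheme.basicOpen_zero]
  refine TopologicalSpace.Opens.ext (f.surjective.preimage_injective ?_)
  exact congr(($hempty : Set X))

theorem isNilpotent_of_app_eq_zero {X Y : Scheme.{u}} (f : X ⟶ Y) [Surjective f] {U : Y.Opens}
    (hU : IsCompact (U : Set Y)) {t : Γ(Y, U)} (ht : f.app U t = 0) : IsNilpotent t :=
  (Scheme.isNilpotent_iff_basicOpen_eq_bot_of_isCompact hU t).mpr
    (basicOpen_eq_bot_of_app_eq_zero f ht)

theorem app_injective_of_surjective {X Y : Scheme.{u}} (f : X ⟶ Y) [Surjective f] [IsReduced Y]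
    (U : Y.Opens) : Function.Injective (f.app U) :=
  (injective_iff_map_eq_zero _).mpr fun t ht ↦
    eq_zero_of_basicOpen_eq_bot t (basicOpen_eq_bot_of_app_eq_zero f ht)

theorem epi_of_surjective_of_isReduced {X Y : Scheme.{u}} (f : X ⟶ Y) [Surjective f]
    [IsReduced Y] : Epi f where
  left_cancellation {Z} v w h := by
    have hbase : v.base = w.base := by
      ext y
      obtain ⟨x, rfl⟩ := f.surjective y
      exact congr($h x)
    refine Scheme.Hom.ext hbase fun U ↦ ?_
    have hle : w ⁻¹ᵁ U ≤ v ⁻¹ᵁ U := fun y hy ↦ by rwa [Scheme.Hom.mem_preimage, hbase]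
    change v.appLE U (w ⁻¹ᵁ U) hle = w.app U
    ext t
    apply app_injective_of_surjective f
    rw [← CommRingCat.comp_apply, ← CommRingCat.comp_apply]
    simp only [Scheme.Hom.app_eq_appLE, Scheme.Hom.appLE_comp_appLE, h]

theorem exists_comp_eq_of_openCover {X Y Z : Scheme.{u}} (π : X ⟶ Y) [Surjective π]
    [IsReduced Y] (𝒰 : Y.OpenCover) (u : X ⟶ Z) (v : ∀ i, 𝒰.X i ⟶ Z)
    (hv : ∀ i, pullback.snd π (𝒰.f i) ≫ v i = pullback.fst π (𝒰.f i) ≫ u) :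
    ∃ w : Y ⟶ Z, π ≫ w = u := by
  have hv' (i) {T : Scheme.{u}} (t : T ⟶ X) (t' : T ⟶ 𝒰.X i) (h : t ≫ π = t' ≫ 𝒰.f i) :
      t' ≫ v i = t ≫ u := by
    rw [← pullback.lift_snd t t' h, Category.assoc, hv, pullback.lift_fst_assoc]
  have hglue (i j) : pullback.fst (𝒰.f i) (𝒰.f j) ≫ v i = pullback.snd (𝒰.f i) (𝒰.f j) ≫ v j := by
    let V := pullback.fst (𝒰.f i) (𝒰.f j) ≫ 𝒰.f i
    have : IsReduced (pullback (𝒰.f i) (𝒰.f j)) := isReduced_of_isOpenImmersion V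
    have := epi_of_surjective_of_isReduced (pullback.snd π V)
    have hcond := pullback.condition (f := π) (g := V)
    rw [← cancel_epi (pullback.snd π V), ← Category.assoc, ← Category.assoc]
    refine (hv' i (pullback.fst π V) _ ?_).trans (hv' j (pullback.fst π V) _ ?_).symm
    · rw [hcond, Category.assoc]
    · rw [hcond, Category.assoc, ← pullback.condition (f := 𝒰.f i)]
  refine ⟨𝒰.glueMorphisms v hglue, Scheme.Cover.hom_ext (𝒰.pullback₁ π) _ _ fun i : 𝒰.I₀ ↦ ?_⟩
  change pullback.fst π (𝒰.f i) ≫ π ≫ _ = pullback.fst π (𝒰.f i) ≫ u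
  rw [pullback.condition_assoc, 𝒰.ι_glueMorphisms, hv]

theorem isSeparated_of_comp_of_surjective {X Y Z : Scheme.{u}} (f : X ⟶ Y) (g : Y ⟶ Z)
    [UniversallyClosed f] [Surjective f] [AlgebraicGeometry.IsSeparated (f ≫ g)] :
    AlgebraicGeometry.IsSeparated g := by
  let ff := pullback.map (f ≫ g) (f ≫ g) g g f f (𝟙 Z) (Category.comp_id _) (Category.comp_id _)
  have : UniversallyClosed ff :=
    MorphismProperty.pullbackMap (P := @UniversallyClosed) inferInstance inferInstance rfl rfl
  have hdiag : f ≫ pullback.diagonal g = pullback.diagonal (f ≫ g) ≫ ff := by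
    apply pullback.hom_ext
    · simp only [ff, Category.assoc, pullback.lift_fst, pullback.diagonal_fst,
        pullback.diagonal_fst_assoc, Category.comp_id]
    · simp only [ff, Category.assoc, pullback.lift_snd, pullback.diagonal_snd,
        pullback.diagonal_snd_assoc, Category.comp_id]
  have : UniversallyClosed (f ≫ pullback.diagonal g) := hdiag ▸ inferInstance
  have := UniversallyClosed.of_comp_surjective f (pullback.diagonal g)
  exact ⟨.of_isPreimmersion _ (pullback.diagonal g).isClosedMap.isClosed_range⟩

theorem quasiCompact_of_comp_of_surjective {X Y Z : Scheme.{u}} (f : X ⟶ Y) (g : Y ⟶ Z)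
    [Surjective f] [QuasiCompact (f ≫ g)] : QuasiCompact g where
  isCompact_preimage U hUo hU := by
    have hfg : IsCompact (f ⁻¹' (g ⁻¹' U)) :=
      QuasiCompact.isCompact_preimage (f := f ≫ g) U hUo hU
    simpa only [Set.image_preimage_eq _ f.surjective] using hfg.image f.continuous

theorem locallyOfFiniteType_of_comp_of_isIntegralHom {X Y S : Scheme.{u}} [IsReduced Y]
    [IsLocallyNoetherian S] (f : X ⟶ Y) (g : Y ⟶ S) [IsIntegralHom f] [Surjective f]
    [LocallyOfFiniteType (f ≫ g)] : LocallyOfFiniteType g := by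
  refine HasRingHomProperty.iff_appLE.mpr fun U V hVU ↦ ?_
  have : IsNoetherianRing Γ(S, U.1) := IsLocallyNoetherian.component_noetherian U
  have := (f ≫ g).finiteType_appLE U.2 (V.2.preimage f) (f.preimage_mono hVU)
  rw [← Scheme.Hom.appLE_comp_appLE _ _ _ V.1 _ hVU le_rfl, ← Scheme.Hom.app_eq_appLE] at this
  exact finiteType_of_comp_of_isIntegral_of_injective this (f.isIntegral_app V.1 V.2)
    (app_injective_of_surjective f V.1)

theorem isIntegral_of_surjective {X Y : Scheme.{u}} (f : X ⟶ Y) [Surjective f]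
    [IrreducibleSpace X] [IsReduced Y] : IsIntegral Y :=
  have := f.surjective.irreducibleSpace f.continuous
  isIntegral_of_irreducibleSpace_of_isReduced Y

theorem exists_affineZariskiSite_mem {X : Scheme.{u}} (x : X) :
    ∃ U : X.AffineZariskiSite, x ∈ U.toOpens := by
  obtain ⟨U, hU, hx, -⟩ := exists_isAffineOpen_mem_and_subset (x := x) (U := ⊤) trivial
  exact ⟨⟨U, hU⟩, hx⟩

theorem isIntegrallyClosed_section {X : Scheme.{u}} [IsIntegral X] {U : X.Opens}
    (hU : IsAffineOpen U) [Nonempty U] (hX : ∀ x ∈ U, IsIntegrallyClosed (X.presheaf.stalk x)) :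
    IsIntegrallyClosed Γ(X, U) := by
  refine .of_localization_maximal fun p _ hp ↦ ?_
  let x := hU.fromSpec ⟨p, inferInstance⟩
  have hx : x ∈ U := hU.range_fromSpec.le ⟨_, rfl⟩
  let := TopCat.Presheaf.algebra_section_stalk X.presheaf ⟨x, hx⟩
  have : IsLocalization.AtPrime (X.presheaf.stalk x) p := hU.isLocalization_stalk' _ hx
  have := hX x hx
  exact .of_equiv (IsLocalization.algEquiv p.primeCompl (X.presheaf.stalk x) _).toRingEquiv

theorem isIntegrallyClosed_stalk_Spec {R : CommRingCat.{u}} [IsDomain R] [IsIntegrallyClosed R]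
    (x : PrimeSpectrum R) : IsIntegrallyClosed ((Spec R).presheaf.stalk x) := by
  let : Algebra R ((Spec R).presheaf.stalk x) := StructureSheaf.stalkAlgebra R x
  have : IsLocalization.AtPrime ((Spec R).presheaf.stalk x) x.asIdeal :=
    StructureSheaf.IsLocalization.to_stalk R x
  exact isIntegrallyClosed_of_isLocalization _ x.asIdeal.primeCompl
    x.asIdeal.primeCompl_le_nonZeroDivisors

theorem isOpenImmersion_SpecMap_of_isLocalizationAway {R S : CommRingCat.{u}} (φ : R ⟶ S) (r : R)
    (hr : @IsLocalization.Away R _ r S _ φ.hom.toAlgebra) : IsOpenImmersion (Spec.map φ) := by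
  algebraize [φ.hom]
  exact IsOpenImmersion.of_isLocalization r

theorem natCast_section_eq_zero {R : CommRingCat.{u}} {n : ℕ} (hn : (n : R) = 0)
    {X : Scheme.{u}} (f : X ⟶ Spec R) (U : X.Opens) : (n : Γ(X, U)) = 0 := by
  rw [← map_natCast ((Scheme.ΓSpecIso R).inv ≫ f.appLE ⊤ U le_top).hom, hn, map_zero]

end Schemes

section Colimits

variable {J : Type*} [Category J] {F G : J ⥤ Scheme.{u}} (τ : F ⟶ G)

theorem isLocallyDirected_of_bijective (hτ : ∀ j, Function.Bijective (τ.app j))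
    [(F ⋙ Scheme.forget).IsLocallyDirected] :
    (G ⋙ Scheme.forget).IsLocallyDirected where
  cond {i j k} fi fj yi yj hy := by
    have hnat {l m} (f : l ⟶ m) (x : F.obj l) : G.map f (τ.app l x) = τ.app m (F.map f x) :=
      congr($(τ.naturality f) x).symm
    obtain ⟨xi, rfl⟩ := (hτ i).2 yi
    obtain ⟨xj, rfl⟩ := (hτ j).2 yj
    have hx : F.map fi xi = F.map fj xj :=
      (hτ k).1 ((hnat fi xi).symm.trans (Eq.trans hy (hnat fj xj)))
    obtain ⟨l, fli, flj, x, hxi, hxj⟩ :=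
      (F ⋙ Scheme.forget).exists_map_eq_of_isLocallyDirected fi fj xi xj hx
    exact ⟨l, fli, flj, τ.app l x, (hnat fli x).trans congr(τ.app i $hxi),
      (hnat flj x).trans congr(τ.app j $hxj)⟩

variable [Quiver.IsThin J] [Small.{u} J] [∀ {i j} (f : i ⟶ j), IsOpenImmersion (G.map f)]
  [(G ⋙ Scheme.forget).IsLocallyDirected] (c : Cocone F) (π : c.pt ⟶ colimit G)

theorem bijective_of_ι_comp_eq (hτ : ∀ j, Function.Bijective (τ.app j))
    (hc : ∀ x : c.pt, ∃ (j : J) (z : F.obj j), c.ι.app j z = x)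
    (hπ : ∀ j, c.ι.app j ≫ π = τ.app j ≫ colimit.ι G j) : Function.Bijective π := by
  have hπ' (j) (x : F.obj j) : π (c.ι.app j x) = colimit.ι G j (τ.app j x) := congr($(hπ j) x)
  refine ⟨fun x y hxy ↦ ?_, fun y ↦ ?_⟩
  · obtain ⟨i, x, rfl⟩ := hc x
    obtain ⟨j, y, rfl⟩ := hc y
    rw [hπ', hπ'] at hxy
    obtain ⟨l, fi, fj, z, hx, hy⟩ := (Scheme.IsLocallyDirected.ι_eq_ι_iff G).mp hxy
    obtain ⟨z, rfl⟩ := (hτ l).2 z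
    have hnat {m} (f : l ⟶ m) : G.map f (τ.app l z) = τ.app m (F.map f z) :=
      congr($(τ.naturality f) z).symm
    have hw {m} (f : l ⟶ m) : c.ι.app m (F.map f z) = c.ι.app l z := congr($(c.w f) z)
    rw [← (hτ i).1 ((hnat fi).symm.trans hx), ← (hτ j).1 ((hnat fj).symm.trans hy), hw, hw]
  · obtain ⟨j, y, rfl⟩ := Scheme.IsLocallyDirected.ι_jointly_surjective G y
    obtain ⟨x, rfl⟩ := (hτ j).2 y
    exact ⟨_, hπ' j x⟩

end Colimits

/-- Two morphisms `a s : P ⟶ X` that agree up to a power: they are equal on points and every section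
of `X` on an affine open has a power whose pullbacks along `a` and `s` coincide. For the action
`a` and the projection `s` of an infinitesimal group scheme acting on `X`, this is what makes the
quotient of `X` by the relation `a = s` a radicial quotient. -/
structure IsRadicialPair {X P : Scheme.{u}} (a s : P ⟶ X) : Prop where
  preimage_eq (U : X.Opens) : a ⁻¹ᵁ U = s ⁻¹ᵁ U
  isAffineHom : IsAffineHom s
  exists_pow {U : X.Opens} (hU : IsAffineOpen U) (f : Γ(X, U)) :
    ∃ n, 0 < n ∧ a.appLE U (s ⁻¹ᵁ U) (preimage_eq U).ge (f ^ n) =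
      s.appLE U (s ⁻¹ᵁ U) le_rfl (f ^ n)

namespace IsRadicialPair

variable {X P : Scheme.{u}} {a s : P ⟶ X}

theorem of_surjective {E : Scheme.{u}} (e : E ⟶ P) [Surjective e] [IsAffineHom s]
    (he : e ≫ a = e ≫ s) {p : ℕ} (hp : p.Prime) (hP : ∀ U : P.Opens, (p : Γ(P, U)) = 0) :
    IsRadicialPair a s := by
  have has (U : X.Opens) : a ⁻¹ᵁ U = s ⁻¹ᵁ U := by
    refine TopologicalSpace.Opens.ext (e.surjective.preimage_injective ?_)
    exact congr((($he ⁻¹ᵁ U : E.Opens) : Set E))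
  refine ⟨has, inferInstance, fun {U} hU f ↦ ?_⟩
  simp only [map_pow]
  refine exists_pow_eq_pow_of_isNilpotent_sub hp (hP _) ?_
  refine isNilpotent_of_app_eq_zero e (hU.preimage s).isCompact ?_
  rw [map_sub, sub_eq_zero, Scheme.Hom.app_eq_appLE, ← CommRingCat.comp_apply,
    ← CommRingCat.comp_apply, Scheme.Hom.appLE_comp_appLE, Scheme.Hom.appLE_comp_appLE]
  simp only [he]

section Invariants

variable (h : IsRadicialPair a s)

/-- The ring of sections over `U` that are invariant, i.e. equalized by `a` and `s`. -/
abbrev invariants (U : X.Opens) : Subring Γ(X, U) :=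
  (a.appLE U (s ⁻¹ᵁ U) (h.preimage_eq U).ge).hom.eqLocus (s.appLE U (s ⁻¹ᵁ U) le_rfl).hom

theorem exists_pow_mem_invariants {U : X.Opens} (hU : IsAffineOpen U) (f : Γ(X, U)) :
    ∃ n, 0 < n ∧ f ^ n ∈ h.invariants U :=
  h.exists_pow hU f

theorem map_mem_invariants {U V : X.Opens} (i : V ⟶ U) {f : Γ(X, U)} (hf : f ∈ h.invariants U) :
    X.presheaf.map i.op f ∈ h.invariants V := by
  have hf' : a.appLE U (s ⁻¹ᵁ U) (h.preimage_eq U).ge f = s.appLE U (s ⁻¹ᵁ U) le_rfl f := hf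
  have key := congr(P.presheaf.map (homOfLE (s.preimage_mono i.le)).op $hf')
  change a.appLE _ _ _ _ = s.appLE _ _ _ _
  simpa only [← CommRingCat.comp_apply, Scheme.Hom.appLE_map, Scheme.Hom.map_appLE] using key

/-- The presheaf `U ↦ h.invariants U` of invariant sections. -/
def presheaf : X.Opensᵒᵖ ⥤ CommRingCat.{u} where
  obj U := .of (h.invariants U.unop)
  map i := CommRingCat.ofHom
    ((X.presheaf.map i).hom.restrict _ _ fun _ hf ↦ h.map_mem_invariants i.unop hf)
  map_id U := by
    ext f
    exact congr($(X.presheaf.map_id U) (f : h.invariants U.unop).1)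
  map_comp i j := by
    ext f
    exact congr($(X.presheaf.map_comp i j) (f : h.invariants _).1)

/-- The inclusion of the invariant sections into all sections. -/
def presheafι : h.presheaf ⟶ X.presheaf where
  app U := CommRingCat.ofHom (h.invariants U.unop).subtype
  naturality _ _ _ := rfl

theorem isLocalizationAway_invariants {U V : X.Opens} (hU : IsAffineOpen U) (b : h.invariants U)
    (i : V ⟶ U) (hV : V = X.basicOpen b.1) :
    @IsLocalization.Away (h.presheaf.obj (op U)) _ b (h.presheaf.obj (op V)) _
      (h.presheaf.map i.op).hom.toAlgebra := by
  have := h.isAffineHom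
  let j : s ⁻¹ᵁ V ⟶ s ⁻¹ᵁ U := homOfLE (s.preimage_mono i.le)
  algebraize [(X.presheaf.map i.op).hom, (P.presheaf.map j.op).hom]
  let : Algebra (h.invariants U) (h.invariants V) := (h.presheaf.map i.op).hom.toAlgebra
  have hA : IsLocalization.Away b.1 Γ(X, V) := hU.isLocalization_of_eq_basicOpen b.1 i hV
  have hR : IsLocalization.Away (s.appLE U (s ⁻¹ᵁ U) le_rfl b.1) Γ(P, s ⁻¹ᵁ V) := by
    refine (hU.preimage s).isLocalization_of_eq_basicOpen _ j ?_
    rw [hV, Scheme.preimage_basicOpen, Scheme.Hom.app_eq_appLE]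
  have hcomm (g : P ⟶ X) (hg : ∀ W, s ⁻¹ᵁ W ≤ g ⁻¹ᵁ W) :
      (g.appLE V (s ⁻¹ᵁ V) (hg V)).hom.comp (algebraMap Γ(X, U) Γ(X, V)) =
        (algebraMap Γ(P, s ⁻¹ᵁ U) Γ(P, s ⁻¹ᵁ V)).comp (g.appLE U (s ⁻¹ᵁ U) (hg U)).hom :=
    congrArg CommRingCat.Hom.hom ((g.map_appLE _ i.op).trans (g.appLE_map _ j.op).symm)
  exact isLocalizationAway_eqLocus (hcomm a fun W ↦ (h.preimage_eq W).ge)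
    (hcomm s fun _ ↦ le_rfl) (fun _ ↦ rfl) b

theorem isIntegral_subtype_invariants {U : X.Opens} (hU : IsAffineOpen U) :
    (h.invariants U).subtype.IsIntegral :=
  isIntegral_subtype_of_forall_exists_pow_mem fun f ↦ h.exists_pow_mem_invariants hU f

theorem isOpenImmersion_SpecMap_presheaf_map {U V : X.Opens} (hU : IsAffineOpen U)
    (b : h.invariants U) (i : V ⟶ U) (hV : V = X.basicOpen b.1) :
    IsOpenImmersion (Spec.map (h.presheaf.map i.op)) :=
  isOpenImmersion_SpecMap_of_isLocalizationAway (h.presheaf.map i.op) b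
    (h.isLocalizationAway_invariants hU b i hV)

end Invariants

section Quotient

open Scheme.AffineZariskiSite

variable (h : IsRadicialPair a s)

/-- The diagram of the spectra of the rings of invariants of the affine opens of `X`, i.e. the
affine charts from which the quotient of `X` by `a = s` is glued. -/
def charts : X.AffineZariskiSite ⥤ Scheme.{u} :=
  toOpensFunctor X ⋙ h.presheaf.rightOp ⋙ Scheme.Spec

/-- The quotient maps of the affine opens of `X` onto the charts. -/
def toCharts : toOpensFunctor X ⋙ X.presheaf.rightOp ⋙ Scheme.Spec ⟶ h.charts :=
  Functor.whiskerLeft _ (Functor.whiskerRight (NatTrans.rightOp h.presheafι) Scheme.Spec)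

theorem isIntegralHom_toCharts_app (U : X.AffineZariskiSite) :
    IsIntegralHom (h.toCharts.app U) :=
  IsIntegralHom.SpecMap_iff.mpr (h.isIntegral_subtype_invariants U.2)

theorem bijective_toCharts_app (U : X.AffineZariskiSite) :
    Function.Bijective (h.toCharts.app U) :=
  (isHomeomorph_comap_subtype_of_forall_exists_pow_mem
    fun f ↦ h.exists_pow_mem_invariants U.2 f).bijective

instance isOpenImmersion_charts_map {U V : X.AffineZariskiSite} (f : U ⟶ V) :
    IsOpenImmersion (h.charts.map f) := by
  obtain ⟨g, hg⟩ := f.le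
  obtain ⟨n, hn, hgn⟩ := h.exists_pow_mem_invariants V.2 g
  have hU : U.toOpens = X.basicOpen (g ^ n) := by rw [X.basicOpen_pow g hn, hg]
  exact h.isOpenImmersion_SpecMap_presheaf_map V.2 ⟨g ^ n, hgn⟩ ((toOpensFunctor X).map f) hU

-- `X` is itself glued from the spectra of its affine opens, so these are locally directed.
instance : (h.charts ⋙ Scheme.forget).IsLocallyDirected :=
  have : ((toOpensFunctor X ⋙ X.presheaf.rightOp ⋙ Scheme.Spec) ⋙
      Scheme.forget).IsLocallyDirected :=
    (relativeGluingData (.of_isIso (𝟙 _))).instIsLocallyDirectedI₀CompFunctorForgetOfIsThin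
  isLocallyDirected_of_bijective h.toCharts h.bijective_toCharts_app

/-- The quotient of `X` by `a = s`. -/
def quotient : Scheme.{u} :=
  colimit h.charts

/-- The affine chart of the quotient given by the invariants of an affine open of `X`. -/
def ι (U : X.AffineZariskiSite) : h.charts.obj U ⟶ h.quotient :=
  colimit.ι h.charts U

instance (U : X.AffineZariskiSite) : IsOpenImmersion (h.ι U) :=
  inferInstanceAs (IsOpenImmersion (colimit.ι h.charts U))

/-- The quotient map; by construction it is glued from the maps `h.toCharts`. -/
def π : X ⟶ h.quotient :=
  (isColimitCocone X).desc ((Cocone.precompose h.toCharts).obj (colimit.cocone h.charts))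

theorem fromSpec_π (U : X.AffineZariskiSite) : U.2.fromSpec ≫ h.π = h.toCharts.app U ≫ h.ι U :=
  (isColimitCocone X).fac _ U

theorem bijective_π : Function.Bijective h.π := by
  refine bijective_of_ι_comp_eq h.toCharts (cocone X) h.π h.bijective_toCharts_app
    (fun x ↦ ?_) h.fromSpec_π
  obtain ⟨U, hx⟩ := exists_affineZariskiSite_mem x
  exact ⟨U, U.2.range_fromSpec.ge hx⟩

instance surjective_π : Surjective h.π :=
  ⟨h.bijective_π.surjective⟩

theorem π_mem_range_ι_iff {U : X.AffineZariskiSite} {x : X} :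
    h.π x ∈ Set.range (h.ι U) ↔ x ∈ U.toOpens := by
  rw [← SetLike.mem_coe, ← U.2.range_fromSpec]
  constructor
  · rintro ⟨y, hy⟩
    obtain ⟨z, rfl⟩ := (h.bijective_toCharts_app U).surjective y
    exact ⟨z, h.bijective_π.injective (congr($(h.fromSpec_π U) z).trans hy)⟩
  · rintro ⟨z, rfl⟩
    exact ⟨h.toCharts.app U z, congr($(h.fromSpec_π U) z).symm⟩

theorem isPullback_π (U : X.AffineZariskiSite) :
    IsPullback U.2.fromSpec (h.toCharts.app U) h.π (h.ι U) := by
  refine (IsOpenImmersion.isPullback _ _ _ _ (h.fromSpec_π U) ?_).flip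
  ext x
  exact h.π_mem_range_ι_iff.trans (by rw [← SetLike.mem_coe, ← U.2.range_fromSpec]; rfl)

/-- The cover of the quotient by the charts of the members of an affine open cover of `X`. -/
def openCover {J : Type u} (U : J → X.AffineZariskiSite) (hU : ∀ x, ∃ j, x ∈ (U j).toOpens) :
    h.quotient.OpenCover where
  I₀ := J
  X j := h.charts.obj (U j)
  f j := h.ι (U j)
  mem₀ := by
    rw [Scheme.presieve₀_mem_precoverage_iff]
    refine ⟨fun y ↦ ?_, fun j ↦ inferInstanceAs (IsOpenImmersion (h.ι (U j)))⟩
    obtain ⟨x, rfl⟩ := h.bijective_π.surjective y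
    exact (hU x).imp fun j hj ↦ h.π_mem_range_ι_iff.mpr hj

instance isReduced_quotient [IsReduced X] : IsReduced h.quotient := by
  have (U : X.AffineZariskiSite) : IsReduced (h.charts.obj U) := by
    have : _root_.IsReduced (h.invariants U.toOpens) :=
      isReduced_of_injective (Subring.subtype _) Subtype.val_injective
    exact inferInstanceAs (IsReduced (Spec (.of (h.invariants U.toOpens))))
  have (U : (h.openCover id exists_affineZariskiSite_mem).I₀) :
    IsReduced ((h.openCover id exists_affineZariskiSite_mem).X U) := this U
  exact .of_openCover _ (h.openCover id exists_affineZariskiSite_mem)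

instance isIntegralHom_π : IsIntegralHom h.π := by
  have : IsZariskiLocalAtTarget @IsIntegralHom.{u} :=
    (HasAffineProperty.iff.mp IsIntegralHom.hasAffineProperty).1
  refine (IsZariskiLocalAtTarget.iff_of_openCover (P := @IsIntegralHom)
    (h.openCover id exists_affineZariskiSite_mem)).mpr fun U : X.AffineZariskiSite ↦ ?_
  have := h.isIntegralHom_toCharts_app U
  change IsIntegralHom (pullback.snd h.π (h.ι U))
  rw [← (h.isPullback_π U).isoPullback_inv_snd]
  exact MorphismProperty.comp_mem @IsIntegralHom _ _ inferInstance this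

theorem SpecMap_appLE_comp_toCharts_app (U : X.AffineZariskiSite) :
    Spec.map (a.appLE U.toOpens (s ⁻¹ᵁ U.toOpens) (h.preimage_eq _).ge) ≫ h.toCharts.app U =
      Spec.map (s.appLE U.toOpens (s ⁻¹ᵁ U.toOpens) le_rfl) ≫ h.toCharts.app U := by
  have key : h.presheafι.app (op U.toOpens) ≫ a.appLE U.toOpens _ (h.preimage_eq _).ge =
      h.presheafι.app (op U.toOpens) ≫ s.appLE U.toOpens (s ⁻¹ᵁ U.toOpens) le_rfl := by
    ext b
    exact b.2
  exact (Spec.map_comp _ _).symm.trans (congr(Spec.map $key).trans (Spec.map_comp _ _))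

theorem comp_π_eq : a ≫ h.π = s ≫ h.π := by
  have := h.isAffineHom
  have hcover : TopologicalSpace.IsOpenCover
      fun U : X.AffineZariskiSite ↦ s ⁻¹ᵁ U.toOpens :=
    .mk <| top_unique fun y _ ↦
      TopologicalSpace.Opens.mem_iSup.mpr (exists_affineZariskiSite_mem (s y))
  refine (P.openCoverOfIsOpenCover _ hcover).hom_ext _ _ fun U : X.AffineZariskiSite ↦ ?_
  have hsU : IsAffineOpen (s ⁻¹ᵁ U.toOpens) := U.2.preimage s
  change (s ⁻¹ᵁ U.toOpens).ι ≫ _ = (s ⁻¹ᵁ U.toOpens).ι ≫ _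
  rw [← hsU.isoSpec_hom_fromSpec, Category.assoc, Category.assoc,
    ← IsAffineOpen.SpecMap_appLE_fromSpec_assoc a U.2 hsU (h.preimage_eq _).ge,
    ← IsAffineOpen.SpecMap_appLE_fromSpec_assoc s U.2 hsU le_rfl, h.fromSpec_π U]
  exact congr(hsU.isoSpec.hom ≫ $((reassoc_of% (h.SpecMap_appLE_comp_toCharts_app U)) (h.ι U)))

theorem exists_toCharts_app_comp_eq {Z : Scheme.{u}} {u : X ⟶ Z} (hu : a ≫ u = s ≫ u)
    {U : X.AffineZariskiSite} {T : Z.Opens} (hT : IsAffineOpen T) (hUT : U.toOpens ≤ u ⁻¹ᵁ T) :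
    ∃ v : h.charts.obj U ⟶ Z, h.toCharts.app U ≫ v = U.2.fromSpec ≫ u := by
  have hmem (t : Γ(Z, T)) : u.appLE T U.toOpens hUT t ∈ h.invariants U.toOpens := by
    change a.appLE _ _ _ _ = s.appLE _ _ _ _
    rw [← CommRingCat.comp_apply, ← CommRingCat.comp_apply]
    simp only [Scheme.Hom.appLE_comp_appLE, hu]
  let v : Γ(Z, T) ⟶ h.presheaf.obj (op U.toOpens) :=
    CommRingCat.ofHom ((u.appLE T U.toOpens hUT).hom.codRestrict _ hmem)
  refine ⟨Spec.map v ≫ hT.fromSpec, ?_⟩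
  change Spec.map (h.presheafι.app (op U.toOpens)) ≫ Spec.map v ≫ _ = _
  rw [← Spec.map_comp_assoc]
  exact IsAffineOpen.SpecMap_appLE_fromSpec u hT U.2 hUT

theorem exists_π_comp_eq [IsReduced X] {Z : Scheme.{u}} {u : X ⟶ Z} (hu : a ≫ u = s ≫ u) :
    ∃ w : h.quotient ⟶ Z, h.π ≫ w = u := by
  let J := { U : X.AffineZariskiSite // ∃ T : Z.Opens, IsAffineOpen T ∧ U.toOpens ≤ u ⁻¹ᵁ T }
  have hJ (x : X) : ∃ U : J, x ∈ U.1.toOpens := by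
    obtain ⟨T, hT, hx, -⟩ := exists_isAffineOpen_mem_and_subset (x := u x) (U := ⊤) trivial
    obtain ⟨U, hU, hxU, hUT⟩ := exists_isAffineOpen_mem_and_subset (x := x) (U := u ⁻¹ᵁ T) hx
    exact ⟨⟨⟨U, hU⟩, T, hT, hUT⟩, hxU⟩
  choose T hT hUT using fun U : J ↦ U.2
  choose v hv using fun U : J ↦ h.exists_toCharts_app_comp_eq hu (hT U) (hUT U)
  refine exists_comp_eq_of_openCover h.π (h.openCover Subtype.val hJ) u v fun U : J ↦ ?_
  change pullback.snd h.π (h.ι U.1) ≫ _ = pullback.fst h.π (h.ι U.1) ≫ _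
  rw [← (h.isPullback_π U.1).isoPullback_inv_snd, ← (h.isPullback_π U.1).isoPullback_inv_fst]
  exact (Category.assoc _ _ _).trans (congr(_ ≫ $(hv U)).trans (Category.assoc _ _ _).symm)

theorem isIntegrallyClosed_invariants [IsIntegral X] [Flat s] {U : X.Opens} (hU : IsAffineOpen U)
    [Nonempty U] (hX : ∀ x ∈ U, IsIntegrallyClosed (X.presheaf.stalk x)) :
    IsIntegrallyClosed (h.invariants U) :=
  have := h.isAffineHom
  have := isIntegrallyClosed_section hU hX
  isIntegrallyClosed_eqLocus_of_flat _ (s.flat_appLE hU (hU.preimage s) le_rfl)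

theorem isIntegrallyClosed_stalk_quotient [IsIntegral X] [Flat s]
    (hX : ∀ x, IsIntegrallyClosed (X.presheaf.stalk x)) (y : h.quotient) :
    IsIntegrallyClosed (h.quotient.presheaf.stalk y) := by
  obtain ⟨U, z, rfl⟩ := Scheme.IsLocallyDirected.ι_jointly_surjective h.charts y
  obtain ⟨t, -⟩ := (h.bijective_toCharts_app U).surjective z
  have : Nonempty U.toOpens := ⟨⟨U.2.fromSpec t, U.2.range_fromSpec.le ⟨t, rfl⟩⟩⟩
  have := h.isIntegrallyClosed_invariants U.2 fun x _ ↦ hX x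
  have : IsIntegrallyClosed ((h.charts.obj U).presheaf.stalk z) :=
    isIntegrallyClosed_stalk_Spec (R := .of (h.invariants U.toOpens)) z
  exact .of_equiv (asIso ((h.ι U).stalkMap z)).commRingCatIsoToRingEquiv.symm

end Quotient

end IsRadicialPair
section Action

variable {G : GroupSchemeOver k} {X Q Q' : SchemeOver k} {α : ActionOver G X}

namespace ActionOver

variable (α)

/-- The action as a morphism `G ×ₖ X ⟶ X`: the universal point of `G` acting on the universal
point of `X`. -/
def hom : pullback G.str X.str ⟶ X.carrier :=
  α.act (pullback.fst _ _) (pullback.snd _ _) pullback.condition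

theorem lift_comp_hom {T : Scheme.{u}} (g : T ⟶ G.carrier) (x : T ⟶ X.carrier)
    (h : g ≫ G.str = x ≫ X.str) : pullback.lift g x h ≫ α.hom = α.act g x h := by
  refine (α.act_natural _ _ _ _ ?_).trans (α.act_congr ?_ ?_ _ _)
  · rw [Category.assoc, Category.assoc, pullback.condition]
  · rw [pullback.lift_fst]
  · rw [pullback.lift_snd]

theorem forall_act_comp_eq_iff {Z : Scheme.{u}} (u : X.carrier ⟶ Z) :
    (∀ {T : Scheme.{u}} (g : T ⟶ G.carrier) (x : T ⟶ X.carrier) (h),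
      α.act g x h ≫ u = x ≫ u) ↔ α.hom ≫ u = pullback.snd G.str X.str ≫ u := by
  refine ⟨fun hu ↦ hu _ _ _, fun hu T g x h ↦ ?_⟩
  rw [← α.lift_comp_hom, Category.assoc, hu, pullback.lift_snd_assoc]

theorem exists_section_comp_hom :
    ∃ e : X.carrier ⟶ pullback G.str X.str,
      e ≫ pullback.snd G.str X.str = 𝟙 X.carrier ∧ e ≫ α.hom = 𝟙 X.carrier := by
  have h : (𝟙 X.carrier ≫ X.str ≫ G.one) ≫ G.str = 𝟙 X.carrier ≫ X.str := by
    simp only [Category.assoc, G.one_str, Category.comp_id]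
  exact ⟨pullback.lift _ _ h, pullback.lift_snd _ _ h,
    (α.lift_comp_hom _ _ h).trans (α.one_act _ h)⟩

theorem isRadicialPair [UniversallyInjective G.str] {p : ℕ} (hp : p.Prime) [CharP k p] :
    IsRadicialPair α.hom (pullback.snd G.str X.str) := by
  obtain ⟨e, he, he'⟩ := α.exists_section_comp_hom
  have : UniversallyInjective (pullback.snd G.str X.str) :=
    UniversallyInjective.isStableUnderBaseChange.of_isPullback (.of_hasPullback G.str X.str) ‹_›
  have : Surjective e :=
    ⟨fun y ↦ ⟨pullback.snd G.str X.str y, (pullback.snd G.str X.str).injective congr($he _)⟩⟩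
  have : Subsingleton G.carrier := G.str.injective.subsingleton
  have : IsAffineHom (pullback.snd G.str X.str) :=
    isAffineHom_isStableUnderBaseChange.of_isPullback (.of_hasPullback G.str X.str) inferInstance
  exact .of_surjective e (he'.trans he.symm) hp fun U ↦
    natCast_section_eq_zero (CharP.cast_eq_zero k p) (pullback.snd G.str X.str ≫ X.str) U

end ActionOver

theorem IsRadicialPair.exists_isCatQuotient [IsReduced X.carrier]
    (h : IsRadicialPair α.hom (pullback.snd G.str X.str)) :
    ∃ g : h.quotient ⟶ Spk k, IsCatQuotient α ⟨h.quotient, g⟩ h.π := by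
  obtain ⟨g, hg⟩ := h.exists_π_comp_eq ((α.forall_act_comp_eq_iff X.str).mp α.act_str)
  refine ⟨g, hg, (α.forall_act_comp_eq_iff h.π).mpr h.comp_π_eq, fun Z u _ hu ↦ ?_⟩
  obtain ⟨w, hw⟩ := h.exists_π_comp_eq ((α.forall_act_comp_eq_iff u).mp hu)
  have := epi_of_surjective_of_isReduced h.π
  exact ⟨w, hw, fun w' hw' ↦ (cancel_epi h.π).mp (hw'.trans hw.symm)⟩

namespace IsCatQuotient

variable {φ : X.carrier ⟶ Q.carrier} {φ' : X.carrier ⟶ Q'.carrier}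

theorem hom_ext (hQ : IsCatQuotient α Q φ) {v w : Q.carrier ⟶ Q'.carrier}
    (hv : φ ≫ v ≫ Q'.str = X.str) (hvw : φ ≫ v = φ ≫ w) : v = w := by
  refine (hQ.2.2 Q' (φ ≫ v) ((Category.assoc _ _ _).trans hv) fun g x h ↦ ?_).unique rfl hvw.symm
  rw [← Category.assoc, hQ.2.1, Category.assoc]

theorem exists_iso (hQ : IsCatQuotient α Q φ) (hQ' : IsCatQuotient α Q' φ') :
    ∃ e : Q.carrier ≅ Q'.carrier, φ ≫ e.hom = φ' := by
  obtain ⟨v, hv, -⟩ := hQ.2.2 Q' φ' hQ'.1 hQ'.2.1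
  obtain ⟨w, hw, -⟩ := hQ'.2.2 Q φ hQ.1 hQ.2.1
  refine ⟨⟨v, w, hQ.hom_ext ?_ ?_, hQ'.hom_ext ?_ ?_⟩, hv⟩
  · rw [Category.assoc, reassoc_of% hv, reassoc_of% hw, hQ.1]
  · rw [reassoc_of% hv, hw, Category.comp_id]
  · rw [Category.assoc, reassoc_of% hw, reassoc_of% hv, hQ'.1]
  · rw [reassoc_of% hw, hv, Category.comp_id]

theorem exists_iso_quotient [IsReduced X.carrier] (hQ : IsCatQuotient α Q φ)
    (h : IsRadicialPair α.hom (pullback.snd G.str X.str)) :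
    ∃ e : h.quotient ≅ Q.carrier, h.π ≫ e.hom = φ :=
  have ⟨_, hg⟩ := h.exists_isCatQuotient
  hg.exists_iso hQ

end IsCatQuotient

end Action

theorem quotient_of_normal_variety_is_normal_general
    {k : Type u} [Field k] (p : ℕ) [Fact p.Prime] [CharP k p]
    (I : GroupSchemeOver k) [UniversallyInjective I.str] (X : SchemeOver k)
    (hXvar : X.IsVariety) (hXnorm : IsNormalScheme X.carrier) (α : ActionOver I X)
    (Q : SchemeOver k) (φ : X.carrier ⟶ Q.carrier) (hQ : IsCatQuotient α Q φ) :
    Q.IsVariety ∧ IsNormalScheme Q.carrier := by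
  obtain ⟨_, hsep, hft, hqc⟩ := hXvar
  have h := α.isRadicialPair (p := p) Fact.out
  obtain ⟨e, rfl⟩ := hQ.exists_iso_quotient h
  have : IsReduced Q.carrier := isReduced_of_isOpenImmersion e.inv
  have : IsIntegralHom (h.π ≫ e.hom) := inferInstance
  have : IsIntegral Q.carrier := isIntegral_of_surjective (h.π ≫ e.hom)
  rw [← hQ.1] at hsep hft hqc
  refine ⟨⟨this, ?_, ?_, ?_⟩, fun y ↦ ⟨inferInstance, ?_⟩⟩
  · exact isSeparated_of_comp_of_surjective (h.π ≫ e.hom) Q.str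
  · exact locallyOfFiniteType_of_comp_of_isIntegralHom (h.π ≫ e.hom) Q.str
  · exact quasiCompact_of_comp_of_surjective (h.π ≫ e.hom) Q.str
  · have := h.isIntegrallyClosed_stalk_quotient (fun x ↦ (hXnorm x).2) (e.inv y)
    exact .of_equiv (asIso (e.inv.stalkMap y)).commRingCatIsoToRingEquiv

/-- Let `k` be a field of characteristic `p > 0`, `I` an infinitesimal
group scheme over `k`, and `X` a normal variety over `k` with an `I`-action. Then the
categorical quotient `X/I` is a normal variety over `k`. -/
theorem quotient_of_normal_variety_is_normal
    {k : Type u} [Field k] (p : ℕ) [Fact p.Prime] [CharP k p]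
    (I : GroupSchemeOver k) (hI : I.IsInfinitesimal)
    (X : SchemeOver k) (hXvar : X.IsVariety) (hXnorm : IsNormalScheme X.carrier)
    (α : ActionOver I X) :
    ∀ (Q : SchemeOver k) (φ : X.carrier ⟶ Q.carrier), IsCatQuotient α Q φ →
      Q.IsVariety ∧ IsNormalScheme Q.carrier :=
  have := hI.2.2
  quotient_of_normal_variety_is_normal_general p I X hXvar hXnorm α
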